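/- Fix d ≥ 1, constants a > 0, γ > 1, pressure p(s) = a s^γ and potential F(s) = a s^γ/(γ−1). Let (r, U) be a smooth, ℤ^d-periodic-in-x solution on [0,T] × ℝ^d of the compressible Euler equations ∂t r + div(rU) = 0, ∂t(rU) + div(r U ⊗ U) + ∇p(r) = 0, with r bounded below by a positive constant. For each ε ∈ (0,1], let (ρ_ε, u_ε) be a smooth, ℤ^d-periodic-in-x solution on [0,T] × ℝ^d of the compressible Navier–Stokes system ∂t ρ + div(ρu) = 0, ∂t(ρu) + div(ρ u ⊗ u) + ∇p(ρ) − 2ε div(ρ D(u)) = 0, with ρ_ε > 0, and with the same initial data: ρ_ε(0,·) = r(0,·) and u_ε(0,·) = U(0,·). Then sup_{t ∈ [0,T]} ∫_{[0,1]^d} [ (1/2) ρ_ε |u_ε − U|² + F(ρ_ε) − F(r) − F′(r)(ρ_ε − r) ](t,x) dx → 0 as ε → 0. -/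

import Mathlib

open Real MeasureTheory Set Filter

noncomputable section

variable {d : ℕ}

/-- `i`-th partial derivative of a scalar function on `ℝᵈ`. -/
def sder (i : Fin d) (f : (Fin d → ℝ) → ℝ) (x : Fin d → ℝ) : ℝ :=
  fderiv ℝ f x (Pi.single i 1)

/-- Jacobian matrix of a vector field on `ℝᵈ`: `(∇u)_{ij} = ∂_j u_i`. -/
def sjac (u : (Fin d → ℝ) → Fin d → ℝ) (x : Fin d → ℝ) : Fin d → Fin d → ℝ :=
  fun i j => sder j (fun y => u y i) x

/-- Symmetric gradient `D(u) = (∇u + (∇u)ᵀ)/2` of a vector field on `ℝᵈ`. -/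
def sD (u : (Fin d → ℝ) → Fin d → ℝ) (x : Fin d → ℝ) : Fin d → Fin d → ℝ :=
  fun i j => (sjac u x i j + sjac u x j i) / 2

/-- Antisymmetric gradient `A(u) = (∇u - (∇u)ᵀ)/2` of a vector field on `ℝᵈ`. -/
def sA (u : (Fin d → ℝ) → Fin d → ℝ) (x : Fin d → ℝ) : Fin d → Fin d → ℝ :=
  fun i j => (sjac u x i j - sjac u x j i) / 2

/-- Time derivative `∂ₜ f` of a scalar function on `ℝ × ℝᵈ`. -/
def tder (f : ℝ × (Fin d → ℝ) → ℝ) (z : ℝ × (Fin d → ℝ)) : ℝ :=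
  fderiv ℝ f z (1, 0)

/-- `i`-th spatial partial derivative `∂ᵢ f` of a scalar function on `ℝ × ℝᵈ`. -/
def xder (i : Fin d) (f : ℝ × (Fin d → ℝ) → ℝ) (z : ℝ × (Fin d → ℝ)) : ℝ :=
  fderiv ℝ f z (0, Pi.single i 1)

/-- Spatial divergence of a (time-dependent) vector field. -/
def xdiv (u : ℝ × (Fin d → ℝ) → Fin d → ℝ) (z : ℝ × (Fin d → ℝ)) : ℝ :=
  ∑ i, xder i (fun y => u y i) z

/-- Spatial Jacobian matrix `(∇u)_{ij} = ∂_j u_i` of a (time-dependent) vector field. -/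
def xjac (u : ℝ × (Fin d → ℝ) → Fin d → ℝ) (z : ℝ × (Fin d → ℝ)) : Fin d → Fin d → ℝ :=
  fun i j => xder j (fun y => u y i) z

/-- Symmetric gradient `D(u) = (∇u + (∇u)ᵀ)/2` of a (time-dependent) vector field. -/
def xD (u : ℝ × (Fin d → ℝ) → Fin d → ℝ) (z : ℝ × (Fin d → ℝ)) : Fin d → Fin d → ℝ :=
  fun i j => (xjac u z i j + xjac u z j i) / 2

/-- Antisymmetric gradient `A(u) = (∇u - (∇u)ᵀ)/2` of a (time-dependent) vector field. -/
def xA (u : ℝ × (Fin d → ℝ) → Fin d → ℝ) (z : ℝ × (Fin d → ℝ)) : Fin d → Fin d → ℝ :=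
  fun i j => (xjac u z i j - xjac u z j i) / 2

/-- Divergence of a matrix field: `(div M)ᵢ = ∑ⱼ ∂ⱼ M_{ij}`. -/
def mdiv (M : ℝ × (Fin d → ℝ) → Fin d → Fin d → ℝ) (z : ℝ × (Fin d → ℝ)) : Fin d → ℝ :=
  fun i => ∑ j, xder j (fun y => M y i j) z

/-- Euclidean inner product on `ℝᵈ`. -/
def dotv (a b : Fin d → ℝ) : ℝ := ∑ i, a i * b i

/-- Frobenius inner product of `d × d` matrices. -/
def frob (M N : Fin d → Fin d → ℝ) : ℝ := ∑ i, ∑ j, M i j * N i j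

/-- The unit box `[0,1]ᵈ`. -/
def box (d : ℕ) : Set (Fin d → ℝ) := Set.univ.pi fun _ => Set.Icc (0 : ℝ) 1

/-- `ℤᵈ`-periodicity in the space variable for scalar functions on `ℝ × ℝᵈ`. -/
def PeriodicX (f : ℝ × (Fin d → ℝ) → ℝ) : Prop :=
  ∀ (t : ℝ) (x : Fin d → ℝ) (k : Fin d → ℤ), f (t, x + fun i => (k i : ℝ)) = f (t, x)

/-- Mass conservation equation `∂ₜ ρ + div (ρ u) = 0` at the point `z`. -/
def MassEq (ρ : ℝ × (Fin d → ℝ) → ℝ) (u : ℝ × (Fin d → ℝ) → Fin d → ℝ)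
    (z : ℝ × (Fin d → ℝ)) : Prop :=
  tder ρ z + xdiv (fun y j => ρ y * u y j) z = 0

/-- Momentum equation `∂ₜ(ρu) + div(ρ u ⊗ u) + ∇(a ρ^γ) - 2 μ div(ρ D(u)) = 0`
at the point `z`. -/
def MomEq (μ a γ : ℝ) (ρ : ℝ × (Fin d → ℝ) → ℝ) (u : ℝ × (Fin d → ℝ) → Fin d → ℝ)
    (z : ℝ × (Fin d → ℝ)) : Prop :=
  ∀ i, tder (fun y => ρ y * u y i) z
      + mdiv (fun y i j => ρ y * u y i * u y j) z i
      + xder i (fun y => a * ρ y ^ γ) z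
      - 2 * μ * mdiv (fun y i j => ρ y * xD u y i j) z i = 0

/-- Compressible Euler momentum equation `∂ₜ(ρu) + div(ρ u ⊗ u) + ∇(a ρ^γ) = 0`
at the point `z`. -/
def EulerMomEq (a γ : ℝ) (ρ : ℝ × (Fin d → ℝ) → ℝ) (u : ℝ × (Fin d → ℝ) → Fin d → ℝ)
    (z : ℝ × (Fin d → ℝ)) : Prop :=
  ∀ i, tder (fun y => ρ y * u y i) z
      + mdiv (fun y i j => ρ y * u y i * u y j) z i
      + xder i (fun y => a * ρ y ^ γ) z = 0

/-!
The relative energy is `E = ρ θ - (p(ρ) - p(r))` with `θ = ½ |u - U|² + h(ρ) - h(r)` and `h = F'`.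
Mass conservation turns the transport of `ρ θ` into `ρ (∂ₜ + u · ∇) θ`, and since
`∇p(ρ) = ρ ∇h(ρ)` the momentum equations give `∂ₜ E + div (flux) = production`, the production
being `-(γ - 1) F(ρ|r) div U - ρ ∇U : (u - U) ⊗ (u - U) - 2 μ ρ D(u) : ∇(u - U)`, where
`F(ρ|r) = F(ρ) - F(r) - F'(r) (ρ - r)`. The first two terms are `O(E)`. In the last one
`D(u) : ∇(u - U) = D(u) : (D(u) - D(U)) ≥ -¼ |D(U)|²` leaves an error `O(μ ρ)`, and
`ρ = O(E + 1)` by coercivity of `F(ρ|r)`. By periodicity the flux integrates to zero, so Grönwall's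
inequality bounds `∫ E` by its initial value plus `O(μ)`.
-/

open scoped Topology

section PressureLaw

/-- The barotropic pressure law `p(s) = a s^γ`. -/
def pressure (a γ s : ℝ) : ℝ := a * s ^ γ

/-- The pressure potential `F(s) = a s^γ / (γ - 1)`, the internal energy per unit volume. -/
def pressurePotential (a γ s : ℝ) : ℝ := a * s ^ γ / (γ - 1)

/-- The specific enthalpy `h = F'`, written in closed form. -/
def enthalpy (a γ s : ℝ) : ℝ := a * γ / (γ - 1) * s ^ (γ - 1)

/-- The relative potential `F(s|q) = F(s) - F(q) - F'(q)(s - q)`, with `F'` replaced by the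
enthalpy. -/
def relPotential (a γ s q : ℝ) : ℝ :=
  pressurePotential a γ s - pressurePotential a γ q - enthalpy a γ q * (s - q)

variable {a γ s q : ℝ}

lemma hasDerivAt_pressurePotential (hγ : 1 ≤ γ) :
    HasDerivAt (pressurePotential a γ) (enthalpy a γ s) s := by
  have h := ((hasDerivAt_rpow_const (x := s) (Or.inr hγ)).const_mul a).div_const (γ - 1)
  refine h.congr_deriv ?_
  unfold enthalpy
  ring

lemma hasDerivAt_pressure (hγ : 1 < γ) :
    HasDerivAt (pressure a γ) ((γ - 1) * enthalpy a γ s) s := by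
  have h := (hasDerivAt_rpow_const (x := s) (Or.inr hγ.le)).const_mul a
  refine h.congr_deriv ?_
  have : γ - 1 ≠ 0 := sub_ne_zero.2 hγ.ne'
  unfold enthalpy
  field_simp

lemma hasDerivAt_enthalpy (hs : s ≠ 0) :
    HasDerivAt (enthalpy a γ) ((γ - 1) * enthalpy a γ s / s) s := by
  have h := (hasDerivAt_rpow_const (p := γ - 1) (Or.inl hs)).const_mul (a * γ / (γ - 1))
  refine h.congr_deriv ?_
  rw [rpow_sub_one hs]
  unfold enthalpy
  ring

lemma pressurePotential_eq_mul_enthalpy_sub_pressure (hγ : γ ≠ 1) (hs : s ≠ 0) :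
    pressurePotential a γ s = s * enthalpy a γ s - pressure a γ s := by
  have : γ - 1 ≠ 0 := sub_ne_zero.2 hγ
  simp only [pressurePotential, enthalpy, pressure, rpow_sub_one hs]
  field_simp
  ring

lemma relPotential_eq_add_sub (hγ : γ ≠ 1) (hq : q ≠ 0) :
    relPotential a γ s q = pressurePotential a γ s + pressure a γ q - s * enthalpy a γ q := by
  rw [relPotential, pressurePotential_eq_mul_enthalpy_sub_pressure hγ hq]
  ring

lemma sub_one_mul_relPotential (hγ : γ ≠ 1) :
    (γ - 1) * relPotential a γ s q
      = pressure a γ s - pressure a γ q - (γ - 1) * enthalpy a γ q * (s - q) := by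
  have : γ - 1 ≠ 0 := sub_ne_zero.2 hγ
  simp only [relPotential, pressurePotential, pressure]
  field_simp

lemma tangent_le_of_convexOn {S : Set ℝ} {f : ℝ → ℝ} {f' x y : ℝ} (hf : ConvexOn ℝ S f)
    (hx : x ∈ S) (hy : y ∈ S) (hfx : HasDerivAt f f' x) : f x + f' * (y - x) ≤ f y := by
  rcases lt_trichotomy x y with hxy | rfl | hyx
  · have h := hf.le_slope_of_hasDerivAt hx hy hxy hfx
    rw [slope_def_field, le_div_iff₀ (sub_pos.2 hxy)] at h
    linarith
  · simp
  · have h := hf.slope_le_of_hasDerivAt hy hx hyx hfx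
    rw [slope_def_field, div_le_iff₀ (sub_pos.2 hyx)] at h
    linarith

lemma convexOn_pressurePotential (ha : 0 ≤ a) (hγ : 1 ≤ γ) :
    ConvexOn ℝ (Ici 0) (pressurePotential a γ) := by
  refine ((convexOn_rpow hγ).smul (div_nonneg ha (sub_nonneg.2 hγ))).congr fun s _ => ?_
  simp only [pressurePotential, smul_eq_mul]
  ring

lemma relPotential_nonneg (ha : 0 ≤ a) (hγ : 1 ≤ γ) (hs : 0 ≤ s) (hq : 0 ≤ q) :
    0 ≤ relPotential a γ s q := by
  have h := tangent_le_of_convexOn (convexOn_pressurePotential ha hγ) hq hs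
    (hasDerivAt_pressurePotential hγ)
  rw [relPotential]
  linarith

lemma enthalpy_lt_enthalpy (ha : 0 < a) (hγ : 1 < γ) (hs : 0 ≤ s) (hsq : s < q) :
    enthalpy a γ s < enthalpy a γ q := by
  have : 0 < γ - 1 := sub_pos.2 hγ
  unfold enthalpy
  gcongr

-- The gap in the Fenchel–Young inequality at a reference density `M + 1` above every `q` grows
-- linearly in `s`, because the enthalpy is strictly increasing.
lemma exists_le_mul_relPotential_add_one (ha : 0 < a) (hγ : 1 < γ) {M : ℝ} (hM : 0 ≤ M) :
    ∃ C, 0 ≤ C ∧ ∀ s q, 0 ≤ s → 0 < q → q ≤ M → s ≤ C * (relPotential a γ s q + 1) := by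
  have hgap : 0 < enthalpy a γ (M + 1) - enthalpy a γ M :=
    sub_pos.2 (enthalpy_lt_enthalpy ha hγ hM (lt_add_one M))
  have hp : ∀ {x : ℝ}, 0 ≤ x → 0 ≤ pressure a γ x := fun hx =>
    mul_nonneg ha.le (rpow_nonneg hx γ)
  have hp' := hp (x := M + 1) (by linarith)
  refine ⟨(1 + pressure a γ (M + 1)) / (enthalpy a γ (M + 1) - enthalpy a γ M), by positivity,
    fun s q hs hq hqM => ?_⟩
  have hq_le : enthalpy a γ q ≤ enthalpy a γ M := by
    rcases hqM.eq_or_lt with rfl | hlt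
    exacts [le_rfl, (enthalpy_lt_enthalpy ha hγ hq.le hlt).le]
  have hrel := relPotential_nonneg (s := s) (q := q) ha.le hγ.le hs hq.le
  have hgrowth : s * (enthalpy a γ (M + 1) - enthalpy a γ M)
      ≤ relPotential a γ s q + pressure a γ (M + 1) := by
    have hshift := relPotential_nonneg (s := s) (q := M + 1) ha.le hγ.le hs (by linarith)
    rw [relPotential_eq_add_sub hγ.ne' (by linarith)] at hshift
    rw [relPotential_eq_add_sub hγ.ne' hq.ne']
    linarith [mul_le_mul_of_nonneg_left hq_le hs, hp hq.le]
  rw [div_mul_eq_mul_div, le_div_iff₀ hgap]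
  linarith [mul_nonneg hp' hrel]

end PressureLaw

section Calculus

lemma fderiv_mul_apply {E : Type*} [NormedAddCommGroup E] [NormedSpace ℝ E] {f g : E → ℝ} {z : E}
    (hf : DifferentiableAt ℝ f z) (hg : DifferentiableAt ℝ g z) (v : E) :
    fderiv ℝ (fun y => f y * g y) z v = f z * fderiv ℝ g z v + g z * fderiv ℝ f z v := by
  simp [fderiv_fun_mul hf hg]

lemma fderiv_comp_apply_of_hasDerivAt {E : Type*} [NormedAddCommGroup E] [NormedSpace ℝ E]
    {φ : ℝ → ℝ} {φ' : ℝ} {f : E → ℝ} {z : E} (hφ : HasDerivAt φ φ' (f z))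
    (hf : DifferentiableAt ℝ f z) (v : E) :
    fderiv ℝ (fun y => φ (f y)) z v = φ' * fderiv ℝ f z v := by
  have h : HasFDerivAt (fun y => φ (f y)) (φ' • fderiv ℝ f z) z :=
    hφ.comp_hasFDerivAt z hf.hasFDerivAt
  simp [h.fderiv]

/-- The material derivative `∂ₜ f + (u · ∇) f` along the velocity field `u`, encoded as the
derivative of `f` in the space-time direction `(1, u)`. -/
def matDer (u : ℝ × (Fin d → ℝ) → Fin d → ℝ) (f : ℝ × (Fin d → ℝ) → ℝ) (z : ℝ × (Fin d → ℝ)) :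
    ℝ :=
  fderiv ℝ f z (1, u z)

variable {f : ℝ × (Fin d → ℝ) → ℝ} {u U G H : ℝ × (Fin d → ℝ) → Fin d → ℝ}
  {z : ℝ × (Fin d → ℝ)}

lemma matDer_eq (u : ℝ × (Fin d → ℝ) → Fin d → ℝ) (f : ℝ × (Fin d → ℝ) → ℝ)
    (z : ℝ × (Fin d → ℝ)) : matDer u f z = tder f z + ∑ j, u z j * xder j f z := by
  have hdir : ((1 : ℝ), u z) = (1, 0) + ∑ j, u z j • ((0 : ℝ), (Pi.single j 1 : Fin d → ℝ)) := by
    ext i <;> simp [Prod.fst_sum, Prod.snd_sum, Finset.sum_apply, Pi.single_apply]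
  simp only [matDer, tder, xder, hdir, map_add, map_sum, map_smul, smul_eq_mul]

lemma matDer_eq_add_sum (u U : ℝ × (Fin d → ℝ) → Fin d → ℝ) (f : ℝ × (Fin d → ℝ) → ℝ)
    (z : ℝ × (Fin d → ℝ)) :
    matDer u f z = matDer U f z + ∑ j, (u z j - U z j) * xder j f z := by
  simp only [matDer_eq, sub_mul, Finset.sum_sub_distrib]
  ring

lemma xdiv_sub (hG : ∀ j, DifferentiableAt ℝ (fun y => G y j) z)
    (hH : ∀ j, DifferentiableAt ℝ (fun y => H y j) z) :
    xdiv (fun y j => G y j - H y j) z = xdiv G z - xdiv H z := by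
  simp only [xdiv, xder, fun j => fderiv_fun_sub (hG j) (hH j), sub_apply,
    Finset.sum_sub_distrib]

lemma xdiv_const_mul (c : ℝ) (hG : ∀ j, DifferentiableAt ℝ (fun y => G y j) z) :
    xdiv (fun y j => c * G y j) z = c * xdiv G z := by
  simp only [xdiv, xder, fun j => fderiv_const_mul (hG j) c, smul_apply,
    smul_eq_mul, Finset.mul_sum]

lemma tder_add_xdiv_mul (hf : DifferentiableAt ℝ f z)
    (hu : ∀ j, DifferentiableAt ℝ (fun y => u y j) z) :
    tder f z + xdiv (fun y j => f y * u y j) z = matDer u f z + f z * xdiv u z := by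
  have hprod : ∀ j, xder j (fun y => f y * u y j) z
      = f z * xder j (fun y => u y j) z + u z j * xder j f z :=
    fun j => fderiv_mul_apply hf (hu j) _
  simp only [xdiv, hprod, Finset.sum_add_distrib, ← Finset.mul_sum, matDer_eq]
  ring

lemma xdiv_sum_mul {S : ℝ × (Fin d → ℝ) → Fin d → Fin d → ℝ} {w : ℝ × (Fin d → ℝ) → Fin d → ℝ}
    (hS : ∀ i j, DifferentiableAt ℝ (fun y => S y i j) z)
    (hw : ∀ i, DifferentiableAt ℝ (fun y => w y i) z) :
    xdiv (fun y j => ∑ i, S y i j * w y i) z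
      = dotv (w z) (mdiv S z) + frob (S z) (xjac w z) := by
  have hprod : ∀ j, xder j (fun y => ∑ i, S y i j * w y i) z
      = ∑ i, (w z i * xder j (fun y => S y i j) z + S z i j * xjac w z i j) := fun j => by
    rw [xder, fderiv_fun_sum fun i _ => (hS i j).fun_mul (hw i), sum_apply]
    exact Finset.sum_congr rfl fun i _ => (fderiv_mul_apply (hS i j) (hw i) _).trans (add_comm _ _)
  simp only [xdiv, hprod, dotv, mdiv, frob, Finset.mul_sum]
  rw [Finset.sum_comm]
  simp only [Finset.sum_add_distrib]

end Calculus

section Flow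

variable {a γ μ : ℝ} {ρ r f : ℝ × (Fin d → ℝ) → ℝ} {u U : ℝ × (Fin d → ℝ) → Fin d → ℝ}
  {z : ℝ × (Fin d → ℝ)}

lemma MassEq.matDer_density (hmass : MassEq ρ u z) (hρ : DifferentiableAt ℝ ρ z)
    (hu : ∀ j, DifferentiableAt ℝ (fun y => u y j) z) :
    matDer u ρ z = -(ρ z * xdiv u z) :=
  eq_neg_of_add_eq_zero_left ((tder_add_xdiv_mul hρ hu).symm.trans hmass)

lemma MassEq.tder_add_xdiv_mul_mul (hmass : MassEq ρ u z) (hρ : DifferentiableAt ℝ ρ z)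
    (hu : ∀ j, DifferentiableAt ℝ (fun y => u y j) z) (hf : DifferentiableAt ℝ f z) :
    tder (fun y => ρ y * f y) z + xdiv (fun y j => ρ y * f y * u y j) z = ρ z * matDer u f z := by
  have hprod : matDer u (fun y => ρ y * f y) z = ρ z * matDer u f z + f z * matDer u ρ z :=
    fderiv_mul_apply hρ hf _
  rw [tder_add_xdiv_mul (hρ.fun_mul hf) hu, hprod, hmass.matDer_density hρ hu]
  ring

lemma EulerMomEq.momEq_zero (h : EulerMomEq a γ ρ u z) : MomEq 0 a γ ρ u z := fun i => by
  simpa only [mul_zero, zero_mul, sub_zero] using h i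

lemma fderiv_pressure_comp_apply (hγ : 1 < γ) (hρ : DifferentiableAt ℝ ρ z) (hρ₀ : ρ z ≠ 0)
    (v : ℝ × (Fin d → ℝ)) :
    fderiv ℝ (fun y => pressure a γ (ρ y)) z v
      = ρ z * fderiv ℝ (fun y => enthalpy a γ (ρ y)) z v := by
  rw [fderiv_comp_apply_of_hasDerivAt (hasDerivAt_pressure hγ) hρ,
    fderiv_comp_apply_of_hasDerivAt (hasDerivAt_enthalpy hρ₀) hρ]
  field_simp

/-- `(ρ, u)` is a classical solution at the space-time point `z`, with positive density, of the
compressible Navier–Stokes system with viscosities `ν(ρ) = μ ρ` and `λ(ρ) = 0`; for `μ = 0` this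
is the compressible Euler system. -/
structure IsFlowAt (μ a γ : ℝ) (ρ : ℝ × (Fin d → ℝ) → ℝ) (u : ℝ × (Fin d → ℝ) → Fin d → ℝ)
    (z : ℝ × (Fin d → ℝ)) : Prop where
  differentiableAt_density : DifferentiableAt ℝ ρ z
  differentiableAt_velocity : ∀ i, DifferentiableAt ℝ (fun y => u y i) z
  density_pos : 0 < ρ z
  mass : MassEq ρ u z
  momentum : MomEq μ a γ ρ u z

namespace IsFlowAt

lemma differentiableAt_enthalpy (h : IsFlowAt μ a γ ρ u z) :
    DifferentiableAt ℝ (fun y => enthalpy a γ (ρ y)) z :=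
  (hasDerivAt_enthalpy h.density_pos.ne').differentiableAt.comp z h.differentiableAt_density

lemma differentiableAt_pressure (h : IsFlowAt μ a γ ρ u z) (hγ : 1 < γ) :
    DifferentiableAt ℝ (fun y => pressure a γ (ρ y)) z :=
  (hasDerivAt_pressure hγ).differentiableAt.comp z h.differentiableAt_density

lemma matDer_enthalpy (h : IsFlowAt μ a γ ρ u z) :
    matDer u (fun y => enthalpy a γ (ρ y)) z
      = -((γ - 1) * enthalpy a γ (ρ z) * xdiv u z) := by
  have hρ₀ := h.density_pos.ne'
  have hchain : matDer u (fun y => enthalpy a γ (ρ y)) z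
      = (γ - 1) * enthalpy a γ (ρ z) / ρ z * matDer u ρ z :=
    fderiv_comp_apply_of_hasDerivAt (hasDerivAt_enthalpy hρ₀) h.differentiableAt_density _
  rw [hchain, h.mass.matDer_density h.differentiableAt_density h.differentiableAt_velocity]
  field_simp

lemma mul_matDer_velocity (h : IsFlowAt μ a γ ρ u z) (hγ : 1 < γ) (i : Fin d) :
    ρ z * matDer u (fun y => u y i) z
      = 2 * μ * mdiv (fun y i j => ρ y * xD u y i j) z i
        - ρ z * xder i (fun y => enthalpy a γ (ρ y)) z := by
  have htransport := h.mass.tder_add_xdiv_mul_mul h.differentiableAt_density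
    h.differentiableAt_velocity (h.differentiableAt_velocity i)
  have hpressure : xder i (fun y => a * ρ y ^ γ) z
      = ρ z * xder i (fun y => enthalpy a γ (ρ y)) z :=
    fderiv_pressure_comp_apply hγ h.differentiableAt_density h.density_pos.ne' _
  have hmomentum := h.momentum i
  rw [hpressure] at hmomentum
  simp only [mdiv, xdiv] at hmomentum htransport ⊢
  linarith

lemma matDer_velocity_of_inviscid (h : IsFlowAt 0 a γ r U z) (hγ : 1 < γ) (i : Fin d) :
    matDer U (fun y => U y i) z = -xder i (fun y => enthalpy a γ (r y)) z := by
  have hmul := h.mul_matDer_velocity hγ i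
  rw [mul_zero, zero_mul, zero_sub, ← mul_neg] at hmul
  exact mul_left_cancel₀ h.density_pos.ne' hmul

end IsFlowAt

end Flow

section RelativeEnergy

/-- The relative energy density `½ ρ |u - U|² + F(ρ) - F(r) - F'(r) (ρ - r)` of a state `(ρ, u)`
with respect to `(r, U)`. -/
def relEnergy (a γ : ℝ) (ρ : ℝ × (Fin d → ℝ) → ℝ) (u : ℝ × (Fin d → ℝ) → Fin d → ℝ)
    (r : ℝ × (Fin d → ℝ) → ℝ) (U : ℝ × (Fin d → ℝ) → Fin d → ℝ) (z : ℝ × (Fin d → ℝ)) : ℝ :=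
  (1 / 2) * ρ z * ∑ i, (u z i - U z i) ^ 2 + pressurePotential a γ (ρ z)
    - pressurePotential a γ (r z) - deriv (pressurePotential a γ) (r z) * (ρ z - r z)

/-- The relative specific enthalpy `θ = ½ |u - U|² + h(ρ) - h(r)`, the density per unit mass that
is transported by the flow `u` in the relative energy balance. -/
def relEnthalpy (a γ : ℝ) (ρ : ℝ × (Fin d → ℝ) → ℝ) (u : ℝ × (Fin d → ℝ) → Fin d → ℝ)
    (r : ℝ × (Fin d → ℝ) → ℝ) (U : ℝ × (Fin d → ℝ) → Fin d → ℝ) (z : ℝ × (Fin d → ℝ)) : ℝ :=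
  (1 / 2) * ∑ i, (u z i - U z i) ^ 2 + enthalpy a γ (ρ z) - enthalpy a γ (r z)

/-- The flux `ρ θ u - (p(ρ) - p(r)) U - 2 μ ρ D(u) (u - U)` of the relative energy. -/
def relEnergyFlux (μ a γ : ℝ) (ρ : ℝ × (Fin d → ℝ) → ℝ) (u : ℝ × (Fin d → ℝ) → Fin d → ℝ)
    (r : ℝ × (Fin d → ℝ) → ℝ) (U : ℝ × (Fin d → ℝ) → Fin d → ℝ) (z : ℝ × (Fin d → ℝ)) :
    Fin d → ℝ := fun j =>
  ρ z * relEnthalpy a γ ρ u r U z * u z j - (pressure a γ (ρ z) - pressure a γ (r z)) * U z j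
    - 2 * μ * ∑ i, ρ z * xD u z i j * (u z i - U z i)

/-- The production `-(γ - 1) F(ρ|r) div U - ρ ∇U : (u - U) ⊗ (u - U) - 2 μ ρ D(u) : ∇(u - U)` of
the relative energy. -/
def relEnergyProduction (μ a γ : ℝ) (ρ : ℝ × (Fin d → ℝ) → ℝ)
    (u : ℝ × (Fin d → ℝ) → Fin d → ℝ) (r : ℝ × (Fin d → ℝ) → ℝ)
    (U : ℝ × (Fin d → ℝ) → Fin d → ℝ) (z : ℝ × (Fin d → ℝ)) : ℝ :=
  -((γ - 1) * relPotential a γ (ρ z) (r z) * xdiv U z)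
    - ρ z * frob (xjac U z) (fun i j => (u z i - U z i) * (u z j - U z j))
    - 2 * μ * (ρ z * frob (xD u z) (xjac (fun y i => u y i - U y i) z))

variable {a γ μ ν : ℝ} {ρ r : ℝ × (Fin d → ℝ) → ℝ} {u U : ℝ × (Fin d → ℝ) → Fin d → ℝ}
  {z : ℝ × (Fin d → ℝ)}

lemma relEnergy_eq_kinetic_add_relPotential (hγ : 1 ≤ γ) :
    relEnergy a γ ρ u r U z
      = (1 / 2) * ρ z * ∑ i, (u z i - U z i) ^ 2 + relPotential a γ (ρ z) (r z) := by
  rw [relEnergy, relPotential, (hasDerivAt_pressurePotential hγ).deriv]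
  ring

lemma relEnergy_eq_mul_relEnthalpy_sub (hγ : 1 < γ) (hρ : ρ z ≠ 0) (hr : r z ≠ 0) :
    relEnergy a γ ρ u r U z
      = ρ z * relEnthalpy a γ ρ u r U z - (pressure a γ (ρ z) - pressure a γ (r z)) := by
  rw [relEnergy_eq_kinetic_add_relPotential hγ.le, relPotential_eq_add_sub hγ.ne' hr,
    pressurePotential_eq_mul_enthalpy_sub_pressure hγ.ne' hρ, relEnthalpy]
  ring

lemma relEnergy_nonneg (ha : 0 ≤ a) (hγ : 1 ≤ γ) (hρ : 0 ≤ ρ z) (hr : 0 ≤ r z) :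
    0 ≤ relEnergy a γ ρ u r U z := by
  rw [relEnergy_eq_kinetic_add_relPotential hγ]
  have := relPotential_nonneg ha hγ hρ hr
  positivity

lemma relEnergy_eq_zero (hρ : ρ z = r z) (hu : u z = U z) : relEnergy a γ ρ u r U z = 0 := by
  simp [relEnergy, hρ, hu]

lemma hasFDerivAt_relEnthalpy (hρ : DifferentiableAt ℝ (fun y => enthalpy a γ (ρ y)) z)
    (hr : DifferentiableAt ℝ (fun y => enthalpy a γ (r y)) z)
    (hu : ∀ i, DifferentiableAt ℝ (fun y => u y i) z)
    (hU : ∀ i, DifferentiableAt ℝ (fun y => U y i) z) :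
    HasFDerivAt (relEnthalpy a γ ρ u r U)
      (∑ i, (u z i - U z i) • (fderiv ℝ (fun y => u y i) z - fderiv ℝ (fun y => U y i) z)
        + fderiv ℝ (fun y => enthalpy a γ (ρ y)) z
        - fderiv ℝ (fun y => enthalpy a γ (r y)) z) z := by
  have hsq := HasFDerivAt.fun_sum (u := Finset.univ) fun i _ =>
    ((hu i).hasFDerivAt.fun_sub (hU i).hasFDerivAt).pow 2
  refine (((hsq.const_mul (1 / 2)).fun_add hρ.hasFDerivAt).fun_sub hr.hasFDerivAt).congr_fderiv ?_
  simp [Finset.smul_sum, smul_smul]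

namespace IsFlowAt

lemma differentiableAt_relEnthalpy (h : IsFlowAt μ a γ ρ u z) (hlim : IsFlowAt ν a γ r U z) :
    DifferentiableAt ℝ (relEnthalpy a γ ρ u r U) z :=
  (hasFDerivAt_relEnthalpy h.differentiableAt_enthalpy hlim.differentiableAt_enthalpy
    h.differentiableAt_velocity hlim.differentiableAt_velocity).differentiableAt

lemma mul_matDer_relEnthalpy (h : IsFlowAt μ a γ ρ u z) (hlim : IsFlowAt 0 a γ r U z)
    (hγ : 1 < γ) :
    ρ z * matDer u (relEnthalpy a γ ρ u r U) z
      = ρ z * (matDer U (fun y => enthalpy a γ (ρ y)) z - matDer U (fun y => enthalpy a γ (r y)) z)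
        - ρ z * frob (xjac U z) (fun i j => (u z i - U z i) * (u z j - U z j))
        + 2 * μ * dotv (fun i => u z i - U z i) (mdiv (fun y i j => ρ y * xD u y i j) z) := by
  have hchain : matDer u (relEnthalpy a γ ρ u r U) z
      = ∑ i, (u z i - U z i) * (matDer u (fun y => u y i) z - matDer u (fun y => U y i) z)
        + matDer u (fun y => enthalpy a γ (ρ y)) z - matDer u (fun y => enthalpy a γ (r y)) z := by
    rw [matDer, (hasFDerivAt_relEnthalpy h.differentiableAt_enthalpy
      hlim.differentiableAt_enthalpy h.differentiableAt_velocity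
      hlim.differentiableAt_velocity).fderiv]
    simp [matDer]
  have hvelocity : ∀ i,
      ρ z * ((u z i - U z i) * (matDer u (fun y => u y i) z - matDer u (fun y => U y i) z))
        = 2 * μ * ((u z i - U z i) * mdiv (fun y i j => ρ y * xD u y i j) z i)
          - ρ z * ((u z i - U z i) * xder i (fun y => enthalpy a γ (ρ y)) z)
          + ρ z * ((u z i - U z i) * xder i (fun y => enthalpy a γ (r y)) z)
          - ρ z * ∑ j, xjac U z i j * ((u z i - U z i) * (u z j - U z j)) := fun i => by
    have hconvective : ∑ j, xjac U z i j * ((u z i - U z i) * (u z j - U z j))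
        = (u z i - U z i) * ∑ j, (u z j - U z j) * xder j (fun y => U y i) z := by
      rw [Finset.mul_sum]
      exact Finset.sum_congr rfl fun j _ => by rw [xjac]; ring
    rw [matDer_eq_add_sum u U (fun y => U y i), hlim.matDer_velocity_of_inviscid hγ, hconvective]
    linear_combination (u z i - U z i) * h.mul_matDer_velocity hγ i
  rw [hchain, matDer_eq_add_sum u U (fun y => enthalpy a γ (ρ y)),
    matDer_eq_add_sum u U (fun y => enthalpy a γ (r y)), mul_sub, mul_add, Finset.mul_sum,
    Finset.sum_congr rfl fun i _ => hvelocity i]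
  simp only [Finset.sum_add_distrib, Finset.sum_sub_distrib, ← Finset.mul_sum, dotv, frob]
  ring

lemma tder_relEnergy (h : IsFlowAt μ a γ ρ u z) (hlim : IsFlowAt ν a γ r U z) (hγ : 1 < γ) :
    tder (relEnergy a γ ρ u r U) z
      = tder (fun y => ρ y * relEnthalpy a γ ρ u r U y) z
        - tder (fun y => pressure a γ (ρ y) - pressure a γ (r y)) z := by
  have heq : relEnergy a γ ρ u r U =ᶠ[𝓝 z] fun y =>
      ρ y * relEnthalpy a γ ρ u r U y - (pressure a γ (ρ y) - pressure a γ (r y)) := by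
    filter_upwards [h.differentiableAt_density.continuousAt.eventually_ne h.density_pos.ne',
      hlim.differentiableAt_density.continuousAt.eventually_ne hlim.density_pos.ne'] with y hρ hr
    exact relEnergy_eq_mul_relEnthalpy_sub hγ hρ hr
  rw [tder, heq.fderiv_eq, fderiv_fun_sub
    (h.differentiableAt_density.fun_mul (h.differentiableAt_relEnthalpy hlim))
    ((h.differentiableAt_pressure hγ).fun_sub (hlim.differentiableAt_pressure hγ))]
  rfl

lemma xdiv_relEnergyFlux (h : IsFlowAt μ a γ ρ u z) (hlim : IsFlowAt ν a γ r U z) (hγ : 1 < γ)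
    (hstress : ∀ i j, DifferentiableAt ℝ (fun y => ρ y * xD u y i j) z) :
    xdiv (relEnergyFlux μ a γ ρ u r U) z
      = xdiv (fun y j => ρ y * relEnthalpy a γ ρ u r U y * u y j) z
        - xdiv (fun y j => (pressure a γ (ρ y) - pressure a γ (r y)) * U y j) z
        - 2 * μ * (dotv (fun i => u z i - U z i) (mdiv (fun y i j => ρ y * xD u y i j) z)
          + ρ z * frob (xD u z) (xjac (fun y i => u y i - U y i) z)) := by
  have hdiff : ∀ i, DifferentiableAt ℝ (fun y => u y i - U y i) z := fun i =>
    (h.differentiableAt_velocity i).fun_sub (hlim.differentiableAt_velocity i)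
  have htransport : ∀ j, DifferentiableAt ℝ (fun y => ρ y * relEnthalpy a γ ρ u r U y * u y j) z :=
    fun j => (h.differentiableAt_density.fun_mul (h.differentiableAt_relEnthalpy hlim)).fun_mul
      (h.differentiableAt_velocity j)
  have hpressure : ∀ j, DifferentiableAt ℝ
      (fun y => (pressure a γ (ρ y) - pressure a γ (r y)) * U y j) z := fun j =>
    ((h.differentiableAt_pressure hγ).fun_sub (hlim.differentiableAt_pressure hγ)).fun_mul
      (hlim.differentiableAt_velocity j)
  have hwork : ∀ j, DifferentiableAt ℝ
      (fun y => ∑ i, ρ y * xD u y i j * (u y i - U y i)) z := fun j =>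
    DifferentiableAt.fun_sum fun i _ => (hstress i j).fun_mul (hdiff i)
  have hfrob : frob (fun i j => ρ z * xD u z i j) (xjac (fun y i => u y i - U y i) z)
      = ρ z * frob (xD u z) (xjac (fun y i => u y i - U y i) z) := by
    simp only [frob, mul_assoc, Finset.mul_sum]
  unfold relEnergyFlux
  rw [xdiv_sub (fun j => (htransport j).fun_sub (hpressure j)) fun j => (hwork j).const_mul _,
    xdiv_sub htransport hpressure, xdiv_const_mul _ hwork, xdiv_sum_mul hstress hdiff, hfrob]

lemma tder_relEnergy_add_xdiv_relEnergyFlux (h : IsFlowAt μ a γ ρ u z)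
    (hlim : IsFlowAt 0 a γ r U z) (hγ : 1 < γ)
    (hstress : ∀ i j, DifferentiableAt ℝ (fun y => ρ y * xD u y i j) z) :
    tder (relEnergy a γ ρ u r U) z + xdiv (relEnergyFlux μ a γ ρ u r U) z
      = relEnergyProduction μ a γ ρ u r U z := by
  have htransport := h.mass.tder_add_xdiv_mul_mul h.differentiableAt_density
    h.differentiableAt_velocity (h.differentiableAt_relEnthalpy hlim)
  have hpressure := tder_add_xdiv_mul
    ((h.differentiableAt_pressure hγ).fun_sub (hlim.differentiableAt_pressure hγ))
    hlim.differentiableAt_velocity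
  have hchain : matDer U (fun y => pressure a γ (ρ y) - pressure a γ (r y)) z
      = ρ z * matDer U (fun y => enthalpy a γ (ρ y)) z
        - r z * matDer U (fun y => enthalpy a γ (r y)) z := by
    rw [matDer, fderiv_fun_sub (h.differentiableAt_pressure hγ) (hlim.differentiableAt_pressure hγ),
      sub_apply, fderiv_pressure_comp_apply hγ h.differentiableAt_density h.density_pos.ne',
      fderiv_pressure_comp_apply hγ hlim.differentiableAt_density hlim.density_pos.ne']
    rfl
  rw [h.tder_relEnergy hlim hγ, h.xdiv_relEnergyFlux hlim hγ hstress, relEnergyProduction,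
    sub_one_mul_relPotential hγ.ne']
  linear_combination htransport - hpressure - hchain + h.mul_matDer_relEnthalpy hlim hγ
    - (ρ z - r z) * hlim.matDer_enthalpy

end IsFlowAt

end RelativeEnergy

section ProductionBound

lemma abs_frob_mul_le {L : ℝ} (hL : 0 ≤ L) {M : Fin d → Fin d → ℝ} (hM : ∀ i j, |M i j| ≤ L)
    (w : Fin d → ℝ) : |frob M fun i j => w i * w j| ≤ d * L * ∑ i, w i ^ 2 := by
  calc |frob M fun i j => w i * w j|
      ≤ ∑ i, ∑ j, L * (|w i| * |w j|) := by
        refine (Finset.abs_sum_le_sum_abs _ _).trans (Finset.sum_le_sum fun i _ => ?_)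
        refine (Finset.abs_sum_le_sum_abs _ _).trans (Finset.sum_le_sum fun j _ => ?_)
        rw [abs_mul, abs_mul]
        gcongr
        exact hM i j
    _ = L * (∑ i, |w i|) ^ 2 := by
        rw [sq, Finset.sum_mul_sum]
        simp only [Finset.mul_sum]
    _ ≤ L * (d * ∑ i, w i ^ 2) := by
        gcongr
        simpa using sq_sum_le_card_mul_sum_sq (s := Finset.univ) (f := fun i => |w i|)
    _ = d * L * ∑ i, w i ^ 2 := by ring

lemma frob_self_le {L : ℝ} {M : Fin d → Fin d → ℝ} (hM : ∀ i j, |M i j| ≤ L) :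
    frob M M ≤ d ^ 2 * L ^ 2 := by
  calc frob M M ≤ ∑ _i : Fin d, ∑ _j : Fin d, L ^ 2 :=
        Finset.sum_le_sum fun i _ => Finset.sum_le_sum fun j _ => by
          simpa only [sq] using sq_le_sq' (abs_le.1 (hM i j)).1 (abs_le.1 (hM i j)).2
    _ = d ^ 2 * L ^ 2 := by
        simp only [Finset.sum_const, Finset.card_univ, Fintype.card_fin, nsmul_eq_mul]
        ring

lemma neg_frob_sub_le (A B : Fin d → Fin d → ℝ) :
    -frob A (fun i j => A i j - B i j) ≤ frob B B / 4 := by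
  simp only [frob, ← Finset.sum_neg_distrib, Finset.sum_div]
  refine Finset.sum_le_sum fun i _ => Finset.sum_le_sum fun j _ => ?_
  linarith [sq_nonneg (A i j - B i j / 2)]

variable {a γ μ L : ℝ} {ρ r : ℝ × (Fin d → ℝ) → ℝ} {u U w : ℝ × (Fin d → ℝ) → Fin d → ℝ}
  {z : ℝ × (Fin d → ℝ)}

lemma frob_xD_xjac : frob (xD u z) (xjac w z) = frob (xD u z) (xD w z) := by
  have hswap : ∑ i, ∑ j, xjac u z i j * xjac w z j i = ∑ i, ∑ j, xjac u z j i * xjac w z i j :=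
    Finset.sum_comm
  have hswap' : ∑ i, ∑ j, xjac u z j i * xjac w z j i = ∑ i, ∑ j, xjac u z i j * xjac w z i j :=
    Finset.sum_comm
  simp only [frob, xD, add_mul, mul_add, add_div, div_mul_eq_mul_div, mul_div_assoc',
    Finset.sum_add_distrib, ← Finset.sum_div, hswap, hswap']
  ring

lemma xD_sub (hu : ∀ i, DifferentiableAt ℝ (fun y => u y i) z)
    (hU : ∀ i, DifferentiableAt ℝ (fun y => U y i) z) :
    xD (fun y i => u y i - U y i) z = fun i j => xD u z i j - xD U z i j := by
  ext i j
  simp only [xD, xjac, xder, fderiv_fun_sub (hu _) (hU _), sub_apply]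
  ring

lemma abs_xD_le (hL : ∀ i j, |xjac u z i j| ≤ L) (i j : Fin d) : |xD u z i j| ≤ L := by
  rw [xD, abs_div, abs_two, div_le_iff₀ two_pos]
  linarith [abs_add_le (xjac u z i j) (xjac u z j i), hL i j, hL j i]

lemma abs_xdiv_le (hL : ∀ i j, |xjac u z i j| ≤ L) : |xdiv u z| ≤ d * L := by
  calc |xdiv u z| ≤ ∑ i, |xjac u z i i| := Finset.abs_sum_le_sum_abs _ _
    _ ≤ ∑ _i : Fin d, L := Finset.sum_le_sum fun i _ => hL i i
    _ = d * L := by simp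

lemma neg_frob_xD_xjac_sub_le (hu : ∀ i, DifferentiableAt ℝ (fun y => u y i) z)
    (hU : ∀ i, DifferentiableAt ℝ (fun y => U y i) z) (hL : ∀ i j, |xjac U z i j| ≤ L) :
    -frob (xD u z) (xjac (fun y i => u y i - U y i) z) ≤ d ^ 2 * L ^ 2 / 4 := by
  rw [frob_xD_xjac, xD_sub hu hU]
  exact (neg_frob_sub_le _ _).trans (by gcongr; exact frob_self_le (abs_xD_le hL))

lemma relEnergyProduction_le (ha : 0 ≤ a) (hγ : 1 ≤ γ) (hμ : 0 ≤ μ) (hρ : 0 ≤ ρ z) (hr : 0 ≤ r z)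
    (hu : ∀ i, DifferentiableAt ℝ (fun y => u y i) z)
    (hU : ∀ i, DifferentiableAt ℝ (fun y => U y i) z)
    (hL : 0 ≤ L) (hUL : ∀ i j, |xjac U z i j| ≤ L) :
    relEnergyProduction μ a γ ρ u r U z
      ≤ (γ + 1) * d * L * relEnergy a γ ρ u r U z + μ * (d ^ 2 * L ^ 2 / 2) * ρ z := by
  have hrel := relPotential_nonneg ha hγ hρ hr
  have hkin : 0 ≤ ρ z * ∑ i, (u z i - U z i) ^ 2 := by positivity
  have hdL : 0 ≤ d * L := by positivity
  have hcompression : -((γ - 1) * relPotential a γ (ρ z) (r z) * xdiv U z)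
      ≤ (γ - 1) * relPotential a γ (ρ z) (r z) * (d * L) := by
    rw [← mul_neg]
    exact mul_le_mul_of_nonneg_left ((neg_le_abs _).trans (abs_xdiv_le hUL))
      (mul_nonneg (sub_nonneg.2 hγ) hrel)
  have hstretching : -(ρ z * frob (xjac U z) fun i j => (u z i - U z i) * (u z j - U z j))
      ≤ ρ z * (d * L * ∑ i, (u z i - U z i) ^ 2) := by
    rw [← mul_neg]
    exact mul_le_mul_of_nonneg_left
      ((neg_le_abs _).trans (abs_frob_mul_le hL hUL fun i => u z i - U z i)) hρ
  have hviscous : -(2 * μ * (ρ z * frob (xD u z) (xjac (fun y i => u y i - U y i) z)))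
      ≤ 2 * μ * (ρ z * (d ^ 2 * L ^ 2 / 4)) := by
    rw [← mul_neg, ← mul_neg]
    gcongr
    exact neg_frob_xD_xjac_sub_le hu hU hUL
  rw [relEnergyProduction, relEnergy_eq_kinetic_add_relPotential hγ]
  linarith [mul_nonneg hdL hrel, mul_nonneg (sub_nonneg.2 hγ) (mul_nonneg hdL hkin)]

end ProductionBound

section PeriodicBox

lemma isCompact_box (d : ℕ) : IsCompact (box d) := isCompact_univ_pi fun _ => isCompact_Icc

lemma box_eq_Icc (d : ℕ) : box d = Icc 0 1 := pi_univ_Icc 0 1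

lemma volume_box (d : ℕ) : volume (box d) = 1 := by
  simp [box_eq_Icc, Real.volume_Icc_pi]

variable {f : ℝ × (Fin d → ℝ) → ℝ} {u : ℝ × (Fin d → ℝ) → Fin d → ℝ}

lemma integrableOn_box (hf : Continuous f) (t : ℝ) :
    IntegrableOn (fun x => f (t, x)) (box d) :=
  (hf.comp (Continuous.prodMk_right t)).continuousOn.integrableOn_compact (isCompact_box d)

lemma exists_norm_le_on_Icc_prod_box {E : Type*} [NormedAddCommGroup E]
    {g : ℝ × (Fin d → ℝ) → E} (hg : Continuous g) (T : ℝ) :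
    ∃ C, 0 ≤ C ∧ ∀ t ∈ Icc 0 T, ∀ x ∈ box d, ‖g (t, x)‖ ≤ C := by
  obtain ⟨C, hC⟩ := (isCompact_Icc.prod (isCompact_box d)).exists_bound_of_continuousOn
    (s := Icc 0 T ×ˢ box d) hg.continuousOn
  exact ⟨max C 0, le_max_right _ _, fun t ht x hx => (hC (t, x) ⟨ht, hx⟩).trans (le_max_left _ _)⟩

lemma contDiff_fderiv_apply {n : WithTop ℕ∞} (hf : ContDiff ℝ (n + 1) f)
    (v : ℝ × (Fin d → ℝ)) : ContDiff ℝ n fun z => fderiv ℝ f z v :=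
  (hf.fderiv_right le_rfl).clm_apply contDiff_const

lemma contDiff_xD {n : WithTop ℕ∞} (hu : ContDiff ℝ (n + 1) u) (i j : Fin d) :
    ContDiff ℝ n fun z => xD u z i j :=
  ((contDiff_fderiv_apply (contDiff_pi.1 hu i) _).add
    (contDiff_fderiv_apply (contDiff_pi.1 hu j) _)).div_const 2

lemma periodicX_xder (hf : PeriodicX f) (j : Fin d) : PeriodicX (xder j f) := fun t x k => by
  have hshift : (fun z => f (z + (0, fun i => (k i : ℝ)))) = f := by
    ext ⟨s, y⟩
    simpa using hf s y k
  have h := fderiv_comp_add_right (𝕜 := ℝ) (f := f) (x := (t, x)) (0, fun i => (k i : ℝ))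
  rw [hshift] at h
  simp [xder, h]

lemma periodicX_xD (hu : ∀ i, PeriodicX fun z => u z i) (i j : Fin d) :
    PeriodicX fun z => xD u z i j := fun t x k =>
  congrArg (· / 2)
    (congrArg₂ (· + ·) (periodicX_xder (hu i) j t x k) (periodicX_xder (hu j) i t x k))

lemma hasDerivAt_integral_box (hf : ContDiff ℝ 1 f) (t : ℝ) :
    HasDerivAt (fun s => ∫ x in box d, f (s, x)) (∫ x in box d, tder f (t, x)) t := by
  have hcont : Continuous (tder f) := (contDiff_fderiv_apply (n := 0) hf _).continuous
  obtain ⟨B, hB⟩ := ((isCompact_closedBall t 1).prod (isCompact_box d)).exists_bound_of_continuousOn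
    hcont.continuousOn
  refine (hasDerivAt_integral_of_dominated_loc_of_deriv_le (F := fun s x => f (s, x))
    (F' := fun s x => tder f (s, x)) (bound := fun _ => B) (Metric.closedBall_mem_nhds t one_pos)
    (Eventually.of_forall fun s => (integrableOn_box hf.continuous s).aestronglyMeasurable)
    (integrableOn_box hf.continuous t) (integrableOn_box hcont t).aestronglyMeasurable ?_
    (integrableOn_box continuous_const t) (Eventually.of_forall fun x s _ => ?_)).2
  · filter_upwards [ae_restrict_mem (isCompact_box d).measurableSet] with x hx s hs
    exact hB (s, x) ⟨hs, hx⟩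
  · exact (hf.differentiable one_ne_zero (s, x)).hasFDerivAt.comp_hasDerivAt s
      ((hasDerivAt_id s).prodMk (hasDerivAt_const s x))

lemma continuous_xdiv (hu : ContDiff ℝ 1 u) : Continuous (xdiv u) :=
  continuous_finsetSum _ fun i _ =>
    (contDiff_fderiv_apply (n := 0) (contDiff_pi.1 hu i) _).continuous

lemma integral_xdiv_eq_zero (hu : ContDiff ℝ 1 u) (hper : ∀ j, PeriodicX fun z => u z j) (t : ℝ) :
    ∫ x in box d, xdiv u (t, x) = 0 := by
  cases d with
  | zero => simp [xdiv]
  | succ n =>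
    have hderiv : ∀ i x, HasFDerivAt (fun x => u (t, x) i)
        ((fderiv ℝ (fun z => u z i) (t, x)).comp (.inr ℝ ℝ (Fin (n + 1) → ℝ))) x := fun i x =>
      ((contDiff_pi.1 hu i).differentiable one_ne_zero (t, x)).hasFDerivAt.comp x
        (hasFDerivAt_prodMk_right t x)
    have hintegrable := integrableOn_box (continuous_xdiv hu) t
    rw [box_eq_Icc] at hintegrable ⊢
    refine (integral_divergence_of_hasFDerivAt_off_countable' 0 1 zero_le_one _ _ ∅ countable_empty
      (fun i x _ => (hderiv i x).continuousAt.continuousWithinAt) (fun x _ i => hderiv i x)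
      hintegrable).trans (Finset.sum_eq_zero fun i _ => sub_eq_zero.2 ?_)
    congr 1 with x
    have hfaces : i.insertNth (1 : ℝ) x
        = i.insertNth 0 x + fun j => ((Pi.single i 1 : Fin (n + 1) → ℤ) j : ℝ) := by
      ext j
      refine Fin.succAboveCases i ?_ (fun k => ?_) j <;> simp
    rw [Pi.zero_apply, Pi.one_apply, hfaces]
    exact hper i t _ _

end PeriodicBox

section EnergyEstimate

/-- `(ρ, u)` is a spatially periodic classical solution on `[0, T]`, with positive density, of the
compressible Navier–Stokes system with viscosities `ν(ρ) = μ ρ` and `λ(ρ) = 0`, or of the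
compressible Euler system when `μ = 0`. -/
structure IsPeriodicFlow (μ a γ T : ℝ) (ρ : ℝ × (Fin d → ℝ) → ℝ)
    (u : ℝ × (Fin d → ℝ) → Fin d → ℝ) : Prop where
  contDiff_density : ContDiff ℝ 1 ρ
  contDiff_velocity : ContDiff ℝ 1 u
  density_pos : ∀ z, 0 < ρ z
  periodic_density : PeriodicX ρ
  periodic_velocity : ∀ i, PeriodicX fun z => u z i
  mass : ∀ t ∈ Icc 0 T, ∀ x, MassEq ρ u (t, x)
  momentum : ∀ t ∈ Icc 0 T, ∀ x, MomEq μ a γ ρ u (t, x)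

variable {μ ν a γ T t : ℝ} {ρ r : ℝ × (Fin d → ℝ) → ℝ} {u U : ℝ × (Fin d → ℝ) → Fin d → ℝ}

namespace IsPeriodicFlow

lemma isFlowAt (h : IsPeriodicFlow μ a γ T ρ u) (ht : t ∈ Icc 0 T) (x : Fin d → ℝ) :
    IsFlowAt μ a γ ρ u (t, x) where
  differentiableAt_density := h.contDiff_density.differentiable one_ne_zero _
  differentiableAt_velocity i :=
    (contDiff_pi.1 h.contDiff_velocity i).differentiable one_ne_zero _
  density_pos := h.density_pos _
  mass := h.mass t ht x
  momentum := h.momentum t ht x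

lemma contDiff_pressure (h : IsPeriodicFlow μ a γ T ρ u) :
    ContDiff ℝ 1 fun z => pressure a γ (ρ z) :=
  contDiff_const.mul (h.contDiff_density.rpow_const_of_ne fun z => (h.density_pos z).ne')

lemma contDiff_enthalpy (h : IsPeriodicFlow μ a γ T ρ u) :
    ContDiff ℝ 1 fun z => enthalpy a γ (ρ z) :=
  contDiff_const.mul (h.contDiff_density.rpow_const_of_ne fun z => (h.density_pos z).ne')

lemma contDiff_relEnthalpy (h : IsPeriodicFlow μ a γ T ρ u) (hlim : IsPeriodicFlow ν a γ T r U) :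
    ContDiff ℝ 1 (relEnthalpy a γ ρ u r U) :=
  ((contDiff_const.mul (ContDiff.sum fun i _ => ((contDiff_pi.1 h.contDiff_velocity i).sub
    (contDiff_pi.1 hlim.contDiff_velocity i)).pow 2)).add h.contDiff_enthalpy).sub
    hlim.contDiff_enthalpy

lemma contDiff_relEnergy (h : IsPeriodicFlow μ a γ T ρ u) (hlim : IsPeriodicFlow ν a γ T r U)
    (hγ : 1 < γ) : ContDiff ℝ 1 (relEnergy a γ ρ u r U) := by
  have heq : relEnergy a γ ρ u r U = fun z =>
      ρ z * relEnthalpy a γ ρ u r U z - (pressure a γ (ρ z) - pressure a γ (r z)) :=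
    funext fun z =>
      relEnergy_eq_mul_relEnthalpy_sub hγ (h.density_pos z).ne' (hlim.density_pos z).ne'
  rw [heq]
  exact (h.contDiff_density.mul (h.contDiff_relEnthalpy hlim)).sub
    (h.contDiff_pressure.sub hlim.contDiff_pressure)

lemma contDiff_stress (h : IsPeriodicFlow μ a γ T ρ u) (hu : ContDiff ℝ 2 u) (i j : Fin d) :
    ContDiff ℝ 1 fun z => ρ z * xD u z i j :=
  h.contDiff_density.mul (contDiff_xD (by rwa [one_add_one_eq_two]) i j)

lemma contDiff_relEnergyFlux (h : IsPeriodicFlow μ a γ T ρ u) (hu : ContDiff ℝ 2 u)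
    (hlim : IsPeriodicFlow ν a γ T r U) : ContDiff ℝ 1 (relEnergyFlux μ a γ ρ u r U) :=
  contDiff_pi.2 fun j =>
    (((h.contDiff_density.mul (h.contDiff_relEnthalpy hlim)).mul
      (contDiff_pi.1 h.contDiff_velocity j)).sub
      ((h.contDiff_pressure.sub hlim.contDiff_pressure).mul
        (contDiff_pi.1 hlim.contDiff_velocity j))).sub
      (contDiff_const.mul (ContDiff.sum fun i _ => (h.contDiff_stress hu i j).mul
        ((contDiff_pi.1 h.contDiff_velocity i).sub (contDiff_pi.1 hlim.contDiff_velocity i))))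

lemma periodic_relEnergyFlux (h : IsPeriodicFlow μ a γ T ρ u)
    (hlim : IsPeriodicFlow ν a γ T r U) (j : Fin d) :
    PeriodicX fun z => relEnergyFlux μ a γ ρ u r U z j := fun t x k => by
  have hu := fun i => h.periodic_velocity i t x k
  have hU := fun i => hlim.periodic_velocity i t x k
  have hD := fun i => periodicX_xD h.periodic_velocity i j t x k
  simp only at hu hU hD
  simp only [relEnergyFlux, relEnthalpy, h.periodic_density t x k, hlim.periodic_density t x k,
    hu, hU, hD]

lemma relEnergyProduction_eq (h : IsPeriodicFlow μ a γ T ρ u) (hu : ContDiff ℝ 2 u)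
    (hlim : IsPeriodicFlow 0 a γ T r U) (hγ : 1 < γ) (ht : t ∈ Icc 0 T) (x : Fin d → ℝ) :
    relEnergyProduction μ a γ ρ u r U (t, x)
      = tder (relEnergy a γ ρ u r U) (t, x) + xdiv (relEnergyFlux μ a γ ρ u r U) (t, x) :=
  ((h.isFlowAt ht x).tder_relEnergy_add_xdiv_relEnergyFlux (hlim.isFlowAt ht x) hγ fun i j =>
    (h.contDiff_stress hu i j).differentiable one_ne_zero _).symm

lemma integrableOn_tder_relEnergy (h : IsPeriodicFlow μ a γ T ρ u)
    (hlim : IsPeriodicFlow ν a γ T r U) (hγ : 1 < γ) (t : ℝ) :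
    IntegrableOn (fun x => tder (relEnergy a γ ρ u r U) (t, x)) (box d) :=
  integrableOn_box (contDiff_fderiv_apply (n := 0) (h.contDiff_relEnergy hlim hγ) _).continuous t

lemma integrableOn_xdiv_relEnergyFlux (h : IsPeriodicFlow μ a γ T ρ u) (hu : ContDiff ℝ 2 u)
    (hlim : IsPeriodicFlow ν a γ T r U) (t : ℝ) :
    IntegrableOn (fun x => xdiv (relEnergyFlux μ a γ ρ u r U) (t, x)) (box d) :=
  integrableOn_box (continuous_xdiv (h.contDiff_relEnergyFlux hu hlim)) t

lemma integrableOn_relEnergyProduction (h : IsPeriodicFlow μ a γ T ρ u) (hu : ContDiff ℝ 2 u)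
    (hlim : IsPeriodicFlow 0 a γ T r U) (hγ : 1 < γ) (ht : t ∈ Icc 0 T) :
    IntegrableOn (fun x => relEnergyProduction μ a γ ρ u r U (t, x)) (box d) := by
  simp only [h.relEnergyProduction_eq hu hlim hγ ht]
  exact (h.integrableOn_tder_relEnergy hlim hγ t).add (h.integrableOn_xdiv_relEnergyFlux hu hlim t)

lemma hasDerivAt_integral_relEnergy (h : IsPeriodicFlow μ a γ T ρ u) (hu : ContDiff ℝ 2 u)
    (hlim : IsPeriodicFlow 0 a γ T r U) (hγ : 1 < γ) (ht : t ∈ Icc 0 T) :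
    HasDerivAt (fun s => ∫ x in box d, relEnergy a γ ρ u r U (s, x))
      (∫ x in box d, relEnergyProduction μ a γ ρ u r U (t, x)) t := by
  refine (hasDerivAt_integral_box (h.contDiff_relEnergy hlim hγ) t).congr_deriv ?_
  simp only [h.relEnergyProduction_eq hu hlim hγ ht]
  rw [integral_add (h.integrableOn_tder_relEnergy hlim hγ t)
    (h.integrableOn_xdiv_relEnergyFlux hu hlim t), integral_xdiv_eq_zero
    (h.contDiff_relEnergyFlux hu hlim) (h.periodic_relEnergyFlux hlim) t, add_zero]

lemma integral_relEnergy_nonneg (h : IsPeriodicFlow μ a γ T ρ u)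
    (hlim : IsPeriodicFlow ν a γ T r U) (ha : 0 ≤ a) (hγ : 1 ≤ γ) (t : ℝ) :
    0 ≤ ∫ x in box d, relEnergy a γ ρ u r U (t, x) :=
  integral_nonneg fun _ => relEnergy_nonneg ha hγ (h.density_pos _).le (hlim.density_pos _).le

lemma exists_density_le_mul_relEnergy_add_one (hlim : IsPeriodicFlow ν a γ T r U) (ha : 0 < a)
    (hγ : 1 < γ) :
    ∃ C, 0 ≤ C ∧ ∀ (ρ : ℝ × (Fin d → ℝ) → ℝ) (u : ℝ × (Fin d → ℝ) → Fin d → ℝ), ∀ t ∈ Icc 0 T,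
      ∀ x ∈ box d, 0 ≤ ρ (t, x) → ρ (t, x) ≤ C * (relEnergy a γ ρ u r U (t, x) + 1) := by
  obtain ⟨M, hM, hrM⟩ := exists_norm_le_on_Icc_prod_box hlim.contDiff_density.continuous T
  obtain ⟨C, hC, hcoercive⟩ := exists_le_mul_relPotential_add_one ha hγ hM
  refine ⟨C, hC, fun ρ u t ht x hx hρ => (hcoercive _ _ hρ (hlim.density_pos _)
    ((le_abs_self _).trans (hrM t ht x hx))).trans ?_⟩
  rw [relEnergy_eq_kinetic_add_relPotential hγ.le]
  gcongr
  exact le_add_of_nonneg_left (by positivity)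

lemma exists_relEnergyProduction_le (hlim : IsPeriodicFlow 0 a γ T r U) (ha : 0 < a)
    (hγ : 1 < γ) :
    ∃ K C, 0 ≤ K ∧ 0 ≤ C ∧ ∀ μ ∈ Icc (0 : ℝ) 1, ∀ ρ u, IsPeriodicFlow μ a γ T ρ u →
      ∀ t ∈ Icc 0 T, ∀ x ∈ box d, relEnergyProduction μ a γ ρ u r U (t, x)
        ≤ K * relEnergy a γ ρ u r U (t, x) + μ * C := by
  have hjac : Continuous (xjac U) := continuous_pi fun i => continuous_pi fun j =>
    (contDiff_fderiv_apply (n := 0) (contDiff_pi.1 hlim.contDiff_velocity i) _).continuous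
  obtain ⟨L, hL, hUL⟩ := exists_norm_le_on_Icc_prod_box hjac T
  obtain ⟨C, hC, hdensity⟩ := hlim.exists_density_le_mul_relEnergy_add_one ha hγ
  have : 0 ≤ γ + 1 := by linarith
  refine ⟨(γ + 1) * d * L + d ^ 2 * L ^ 2 / 2 * C, d ^ 2 * L ^ 2 / 2 * C, by positivity,
    by positivity, fun μ hμ ρ u h t ht x hx => ?_⟩
  have hρ := (h.density_pos (t, x)).le
  have hE := relEnergy_nonneg (u := u) (U := U) ha.le hγ.le hρ (hlim.density_pos (t, x)).le
  calc relEnergyProduction μ a γ ρ u r U (t, x)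
      ≤ (γ + 1) * d * L * relEnergy a γ ρ u r U (t, x)
        + μ * (d ^ 2 * L ^ 2 / 2) * ρ (t, x) :=
        relEnergyProduction_le ha.le hγ.le hμ.1 hρ (hlim.density_pos _).le
          (h.isFlowAt ht x).differentiableAt_velocity (hlim.isFlowAt ht x).differentiableAt_velocity
          hL fun i j => (norm_le_pi_norm _ j).trans ((norm_le_pi_norm _ i).trans (hUL t ht x hx))
    _ ≤ (γ + 1) * d * L * relEnergy a γ ρ u r U (t, x)
        + μ * (d ^ 2 * L ^ 2 / 2) * (C * (relEnergy a γ ρ u r U (t, x) + 1)) := by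
        have := hμ.1
        gcongr
        exact hdensity ρ u t ht x hx hρ
    _ = (γ + 1) * d * L * relEnergy a γ ρ u r U (t, x)
        + μ * (d ^ 2 * L ^ 2 / 2 * C * relEnergy a γ ρ u r U (t, x))
        + μ * (d ^ 2 * L ^ 2 / 2 * C) := by ring
    _ ≤ ((γ + 1) * d * L + d ^ 2 * L ^ 2 / 2 * C) * relEnergy a γ ρ u r U (t, x)
        + μ * (d ^ 2 * L ^ 2 / 2 * C) := by
        have := mul_le_of_le_one_left
          (by positivity : 0 ≤ d ^ 2 * L ^ 2 / 2 * C * relEnergy a γ ρ u r U (t, x)) hμ.2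
        linarith

theorem exists_integral_relEnergy_le_gronwallBound (hlim : IsPeriodicFlow 0 a γ T r U)
    (ha : 0 < a) (hγ : 1 < γ) :
    ∃ K C, 0 ≤ K ∧ 0 ≤ C ∧ ∀ μ ∈ Icc (0 : ℝ) 1, ∀ ρ u, IsPeriodicFlow μ a γ T ρ u →
      ContDiff ℝ 2 u → ∀ t ∈ Icc 0 T, ∫ x in box d, relEnergy a γ ρ u r U (t, x)
        ≤ gronwallBound (∫ x in box d, relEnergy a γ ρ u r U (0, x)) K (μ * C) t := by
  obtain ⟨K, C, hK, hC, hproduction⟩ := hlim.exists_relEnergyProduction_le ha hγ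
  refine ⟨K, C, hK, hC, fun μ hμ ρ u h hu t ht => ?_⟩
  have hderiv : ∀ s ∈ Icc 0 T, HasDerivAt (fun s => ∫ x in box d, relEnergy a γ ρ u r U (s, x))
      (∫ x in box d, relEnergyProduction μ a γ ρ u r U (s, x)) s := fun s hs =>
    h.hasDerivAt_integral_relEnergy hu hlim hγ hs
  have hbound : ∀ s ∈ Icc 0 T, ∫ x in box d, relEnergyProduction μ a γ ρ u r U (s, x)
      ≤ K * (∫ x in box d, relEnergy a γ ρ u r U (s, x)) + μ * C := fun s hs => by
    have hE := (integrableOn_box (h.contDiff_relEnergy hlim hγ).continuous s).const_mul K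
    have hconst := integrableOn_box (d := d) (continuous_const (y := μ * C)) s
    calc ∫ x in box d, relEnergyProduction μ a γ ρ u r U (s, x)
        ≤ ∫ x in box d, (K * relEnergy a γ ρ u r U (s, x) + μ * C) :=
          setIntegral_mono_on (h.integrableOn_relEnergyProduction hu hlim hγ hs) (hE.add hconst)
            (isCompact_box d).measurableSet (hproduction μ hμ ρ u h s hs)
      _ = K * (∫ x in box d, relEnergy a γ ρ u r U (s, x)) + μ * C := by
          rw [integral_add hE hconst, integral_const_mul, setIntegral_const, measureReal_def,
            volume_box, ENNReal.toReal_one, one_smul]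
  simpa only [sub_zero] using le_gronwallBound_of_liminf_deriv_right_le
    (fun s hs => (hderiv s hs).continuousAt.continuousWithinAt)
    (fun s hs _ hlt => (hderiv s (Ico_subset_Icc_self hs)).hasDerivWithinAt.liminf_right_slope_le
      hlt) le_rfl (fun s hs => hbound s (Ico_subset_Icc_self hs)) t ht

end IsPeriodicFlow

end EnergyEstimate

section InviscidLimit

lemma tendsto_gronwallBound_zero {ι : Type*} {l : Filter ι} {δ ε : ι → ℝ}
    (hδ : Tendsto δ l (𝓝 0)) (hε : Tendsto ε l (𝓝 0)) (K x : ℝ) :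
    Tendsto (fun i => gronwallBound (δ i) K (ε i) x) l (𝓝 0) := by
  unfold gronwallBound
  split_ifs
  · simpa using hδ.add (hε.mul_const x)
  · simpa using (hδ.mul_const _).add ((hε.div_const K).mul_const _)

theorem inviscid_limit_relative_energy_general {a γ T : ℝ} (ha : 0 < a) (hγ : 1 < γ) (hT : 0 ≤ T)
    {r : ℝ × (Fin d → ℝ) → ℝ} {U : ℝ × (Fin d → ℝ) → Fin d → ℝ}
    (hlim : IsPeriodicFlow 0 a γ T r U)
    {ρ : ℝ → ℝ × (Fin d → ℝ) → ℝ} {u : ℝ → ℝ × (Fin d → ℝ) → Fin d → ℝ}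
    (hflow : ∀ ε ∈ Ioc (0 : ℝ) 1, IsPeriodicFlow ε a γ T (ρ ε) (u ε))
    (hu : ∀ ε ∈ Ioc (0 : ℝ) 1, ContDiff ℝ 2 (u ε))
    (hinit : Tendsto (fun ε => ∫ x in box d, relEnergy a γ (ρ ε) (u ε) r U (0, x))
      (𝓝[Ioc 0 1] 0) (𝓝 0)) :
    Tendsto (fun ε => ⨆ t ∈ Icc 0 T, ∫ x in box d, relEnergy a γ (ρ ε) (u ε) r U (t, x))
      (𝓝[Ioc 0 1] 0) (𝓝 0) := by
  obtain ⟨K, C, hK, hC, hgronwall⟩ := hlim.exists_integral_relEnergy_le_gronwallBound ha hγ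
  have hμC : Tendsto (fun ε => ε * C) (𝓝[Ioc 0 1] 0) (𝓝 0) := by
    have hid : Tendsto (fun ε : ℝ => ε) (𝓝[Ioc 0 1] 0) (𝓝 0) := nhdsWithin_le_nhds
    simpa only [zero_mul] using hid.mul_const C
  refine tendsto_of_tendsto_of_tendsto_of_le_of_le' tendsto_const_nhds
    (tendsto_gronwallBound_zero hinit hμC K T) ?_ ?_
  · filter_upwards [self_mem_nhdsWithin] with ε hε
    exact Real.iSup_nonneg fun t => Real.iSup_nonneg fun _ =>
      (hflow ε hε).integral_relEnergy_nonneg hlim ha.le hγ.le t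
  · filter_upwards [self_mem_nhdsWithin] with ε hε
    have hnonneg := (hflow ε hε).integral_relEnergy_nonneg hlim ha.le hγ.le
    have hle : ∀ t ∈ Icc 0 T, ∫ x in box d, relEnergy a γ (ρ ε) (u ε) r U (t, x)
        ≤ gronwallBound (∫ x in box d, relEnergy a γ (ρ ε) (u ε) r U (0, x)) K (ε * C) T :=
      fun t ht => (hgronwall ε (Ioc_subset_Icc_self hε) _ _ (hflow ε hε) (hu ε hε) t ht).trans
        (gronwallBound_mono (hnonneg 0) (mul_nonneg hε.1.le hC) hK ht.2)
    have hbound := (hnonneg T).trans (hle T (right_mem_Icc.2 hT))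
    exact Real.iSup_le (fun t => Real.iSup_le (hle t) hbound) hbound

end InviscidLimit

/-- Inviscid limit in relative energy: if `(r,U)` is a smooth,
periodic, uniformly positive solution of compressible Euler and, for each
`ε ∈ (0,1]`, `(ρ_ε, u_ε)` is a smooth periodic positive solution of the
compressible Navier–Stokes system with viscosity `ε` and the same initial data,
then `sup_{t∈[0,T]} ∫ [½ρ_ε|u_ε − U|² + F(ρ_ε) − F(r) − F′(r)(ρ_ε − r)] → 0`
as `ε → 0⁺`, where `F(s) = a s^γ/(γ−1)`. -/
theorem inviscid_limit_relative_energy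
    {d : ℕ} (hd : 1 ≤ d) (a γ T : ℝ)
    (ha : 0 < a) (hγ : 1 < γ) (hT : 0 ≤ T)
    (r : ℝ × (Fin d → ℝ) → ℝ) (U : ℝ × (Fin d → ℝ) → Fin d → ℝ)
    (hr : ContDiff ℝ (⊤ : ℕ∞) r) (hU : ContDiff ℝ (⊤ : ℕ∞) U)
    (hrper : PeriodicX r) (hUper : ∀ i, PeriodicX fun z => U z i)
    (c : ℝ) (hc : 0 < c) (hrlb : ∀ z, c ≤ r z)
    (hrmass : ∀ t ∈ Set.Icc 0 T, ∀ x : Fin d → ℝ, MassEq r U (t, x))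
    (hrmom : ∀ t ∈ Set.Icc 0 T, ∀ x : Fin d → ℝ, EulerMomEq a γ r U (t, x))
    (ρ : ℝ → ℝ × (Fin d → ℝ) → ℝ) (u : ℝ → ℝ × (Fin d → ℝ) → Fin d → ℝ)
    (hρ : ∀ ε ∈ Set.Ioc (0 : ℝ) 1, ContDiff ℝ (⊤ : ℕ∞) (ρ ε))
    (hu : ∀ ε ∈ Set.Ioc (0 : ℝ) 1, ContDiff ℝ (⊤ : ℕ∞) (u ε))
    (hρper : ∀ ε ∈ Set.Ioc (0 : ℝ) 1, PeriodicX (ρ ε))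
    (huper : ∀ ε ∈ Set.Ioc (0 : ℝ) 1, ∀ i, PeriodicX fun z => u ε z i)
    (hρpos : ∀ ε ∈ Set.Ioc (0 : ℝ) 1, ∀ z, 0 < ρ ε z)
    (hmass : ∀ ε ∈ Set.Ioc (0 : ℝ) 1, ∀ t ∈ Set.Icc 0 T, ∀ x : Fin d → ℝ,
      MassEq (ρ ε) (u ε) (t, x))
    (hmom : ∀ ε ∈ Set.Ioc (0 : ℝ) 1, ∀ t ∈ Set.Icc 0 T, ∀ x : Fin d → ℝ,
      MomEq ε a γ (ρ ε) (u ε) (t, x))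
    (hinit : ∀ ε ∈ Set.Ioc (0 : ℝ) 1, ∀ x : Fin d → ℝ,
      ρ ε (0, x) = r (0, x) ∧ u ε (0, x) = U (0, x)) :
    Filter.Tendsto
      (fun ε : ℝ => ⨆ t ∈ Set.Icc (0 : ℝ) T,
        ∫ x in box d,
          ((1 / 2) * ρ ε (t, x) * ∑ i, (u ε (t, x) i - U (t, x) i) ^ 2
            + a * ρ ε (t, x) ^ γ / (γ - 1) - a * r (t, x) ^ γ / (γ - 1)
            - deriv (fun q : ℝ => a * q ^ γ / (γ - 1)) (r (t, x)) * (ρ ε (t, x) - r (t, x))))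
      (nhdsWithin 0 (Set.Ioc 0 1)) (nhds 0) := by
  have hlim : IsPeriodicFlow 0 a γ T r U :=
    { contDiff_density := hr.of_le (mod_cast le_top)
      contDiff_velocity := hU.of_le (mod_cast le_top)
      density_pos := fun z => hc.trans_le (hrlb z)
      periodic_density := hrper
      periodic_velocity := hUper
      mass := hrmass
      momentum := fun t ht x => (hrmom t ht x).momEq_zero }
  have hflow : ∀ ε ∈ Ioc (0 : ℝ) 1, IsPeriodicFlow ε a γ T (ρ ε) (u ε) := fun ε hε =>
    { contDiff_density := (hρ ε hε).of_le (mod_cast le_top)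
      contDiff_velocity := (hu ε hε).of_le (mod_cast le_top)
      density_pos := hρpos ε hε
      periodic_density := hρper ε hε
      periodic_velocity := huper ε hε
      mass := hmass ε hε
      momentum := hmom ε hε }
  have hdata : ∀ᶠ ε in 𝓝[Ioc 0 1] 0,
      0 = ∫ x in box d, relEnergy a γ (ρ ε) (u ε) r U (0, x) := by
    filter_upwards [self_mem_nhdsWithin] with ε hε
    simp [fun x => relEnergy_eq_zero (a := a) (γ := γ) (hinit ε hε x).1 (hinit ε hε x).2]
  exact inviscid_limit_relative_energy_general ha hγ hT hlim hflow
    (fun ε hε => contDiff_infty.1 (hu ε hε) 2) (tendsto_const_nhds.congr' hdata)
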